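/- arXiv:1104.1843 — 4 statements merged into one kernel-verified Lean document; each statement's English description precedes it below -/
import Mathlib

section
/- Let ρ be as in the context, assumed positive semidefinite. For the measurement in the σ₂ eigenbasis of the second qubit, i.e. B₀ = (1/2)(I+σ₂), B₁ = (1/2)(I−σ₂), one has p₀ = p₁ = 1/2 where p_k = Tr[(I⊗B_k)ρ(I⊗B_k)], and the conditional entropy p₀S(ρ₀) + p₁S(ρ₁), where ρ_k = (I⊗B_k)ρ(I⊗B_k)/p_k, equals S₃ = 1 + f(√(r²+c₂²)). -/
open Matrix Polynomial
open scoped Kronecker ComplexOrder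

noncomputable section

/-- 2×2 complex matrices. -/
abbrev M2 : Type := Matrix (Fin 2) (Fin 2) ℂ
/-- 4×4 complex matrices, indexed by pairs (two-qubit operators). -/
abbrev M4 : Type := Matrix (Fin 2 × Fin 2) (Fin 2 × Fin 2) ℂ

/-- Pauli matrix σ₁. -/
def σ1 : M2 := !![0, 1; 1, 0]
/-- Pauli matrix σ₂. -/
def σ2 : M2 := !![0, -Complex.I; Complex.I, 0]
/-- Pauli matrix σ₃. -/
def σ3 : M2 := !![1, 0; 0, -1]

/-- f(t) = −((1−t)/2)·log₂(1−t) − ((1+t)/2)·log₂(1+t); the convention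
0·log₂0 = 0 is automatic since `Real.logb 2 0 = 0`. -/
def f (t : ℝ) : ℝ :=
  -((1 - t) / 2) * Real.logb 2 (1 - t) - ((1 + t) / 2) * Real.logb 2 (1 + t)

/-- Von Neumann entropy (base 2): −Σ λᵢ log₂ λᵢ over the eigenvalues of `X`
(the roots of the characteristic polynomial, with multiplicity; for a PSD
Hermitian matrix these are the real nonnegative eigenvalues). -/
def entropy {n : Type} [Fintype n] [DecidableEq n] (X : Matrix n n ℂ) : ℝ :=
  -((X.charpoly.roots.map (fun z => z.re * Real.logb 2 z.re)).sum)

/-- The state ρ = (1/4)[I⊗I + r σ₃⊗I + s I⊗σ₃ + c₁ σ₁⊗σ₁ + c₂ σ₂⊗σ₂ + c₃ σ₃⊗σ₃]. -/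
def rho (r s c1 c2 c3 : ℝ) : M4 :=
  (1 / 4 : ℂ) • ((1 : M2) ⊗ₖ (1 : M2) + (r : ℂ) • (σ3 ⊗ₖ (1 : M2))
    + (s : ℂ) • ((1 : M2) ⊗ₖ σ3) + (c1 : ℂ) • (σ1 ⊗ₖ σ1)
    + (c2 : ℂ) • (σ2 ⊗ₖ σ2) + (c3 : ℂ) • (σ3 ⊗ₖ σ3))

/-- The state after the phase-flip channel:
ε_p(ρ) = (1/4)[I⊗I + r σ₃⊗I + s I⊗σ₃ + (1−p)²c₁ σ₁⊗σ₁ + (1−p)²c₂ σ₂⊗σ₂ + c₃ σ₃⊗σ₃]. -/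
def epsRho (p r s c1 c2 c3 : ℝ) : M4 :=
  rho r s ((1 - p) ^ 2 * c1) ((1 - p) ^ 2 * c2) c3

/-- Partial trace over the second qubit. -/
def ptraceB (X : M4) : M2 := Matrix.of fun i j => ∑ k : Fin 2, X (i, k) (j, k)

/-- Partial trace over the first qubit. -/
def ptraceA (X : M4) : M2 := Matrix.of fun i j => ∑ k : Fin 2, X (k, i) (k, j)

/-- (I⊗B) X (I⊗B): the (unnormalized) post-measurement operator. -/
def measOp (B : M2) (X : M4) : M4 :=
  ((1 : M2) ⊗ₖ B) * X * ((1 : M2) ⊗ₖ B)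

/-- p_k = Tr[(I⊗B) X (I⊗B)] (real part). -/
def prob (B : M2) (X : M4) : ℝ := ((measOp B X).trace).re

/-- Conditional entropy p₀ S(ρ₀) + p₁ S(ρ₁) for the projective measurement {B, I−B}
on the second qubit, with ρ_k = (I⊗B_k) X (I⊗B_k) / p_k (with the convention that
a zero-probability outcome contributes 0, since then `(p_k)⁻¹ = 0`). -/
def condEnt (X : M4) (B : M2) : ℝ :=
  prob B X * entropy (((prob B X : ℝ) : ℂ)⁻¹ • measOp B X)
    + prob (1 - B) X * entropy (((prob (1 - B) X : ℝ) : ℂ)⁻¹ • measOp (1 - B) X)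

/-- B is a rank-one orthogonal projection on ℂ². -/
def IsRankOneProj (B : M2) : Prop := B.IsHermitian ∧ B * B = B ∧ B.rank = 1

lemma aux_Bk (e : ℂ) (he : e * e = 1) :
    ((1 / 2 : ℂ) • (1 + e • σ2)) * σ2 * ((1 / 2 : ℂ) • (1 + e • σ2)) = e • ((1 / 2 : ℂ) • (1 + e • σ2)) ∧
    ((1 / 2 : ℂ) • (1 + e • σ2)) * σ1 * ((1 / 2 : ℂ) • (1 + e • σ2)) = 0 ∧
    ((1 / 2 : ℂ) • (1 + e • σ2)) * σ3 * ((1 / 2 : ℂ) • (1 + e • σ2)) = 0 ∧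
    ((1 / 2 : ℂ) • (1 + e • σ2)) * ((1 / 2 : ℂ) • (1 + e • σ2)) = ((1 / 2 : ℂ) • (1 + e • σ2)) := by
  have hI := Complex.I_mul_I
  refine ⟨?_, ?_, ?_, ?_⟩ <;> ext i j <;> fin_cases i <;> fin_cases j <;>
    simp [σ1, σ2, σ3, Matrix.mul_apply, Fin.sum_univ_two, Matrix.one_apply] <;> grind

lemma aux_meas (r s c1 c2 c3 : ℝ) (e : ℂ) (he : e * e = 1) :
    measOp ((1 / 2 : ℂ) • (1 + e • σ2)) (rho r s c1 c2 c3) =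
      ((1 / 4 : ℂ) • (1 + (r : ℂ) • σ3 + (e * c2) • σ2)) ⊗ₖ ((1 / 2 : ℂ) • (1 + e • σ2)) := by
  obtain ⟨h2, h1, h3, h0⟩ := aux_Bk e he
  generalize ((1 / 2 : ℂ) • (1 + e • σ2)) = B at *
  simp only [measOp, rho, Matrix.mul_add, Matrix.add_mul, Matrix.mul_smul, Matrix.smul_mul,
    ← Matrix.mul_kronecker_mul, Matrix.one_mul, Matrix.mul_one, h2, h1, h3, h0,
    Matrix.kronecker_zero, Matrix.add_kronecker, Matrix.smul_kronecker, Matrix.kronecker_smul,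
    smul_zero, add_zero, smul_smul, smul_add]
  module

lemma aux_charpoly (A : M2) (e : ℂ) (he : e * e = 1) :
    (A ⊗ₖ ((1 / 2 : ℂ) • (1 + e • σ2))).charpoly = X ^ 2 * A.charpoly := by
  let v : Fin 2 → ℂ := ![1, e * Complex.I]
  let w : Fin 2 → ℂ := ![1 / 2, - (e * Complex.I) / 2]
  let U : Matrix (Fin 2 × Fin 2) (Fin 2) ℂ := Matrix.of fun p j => A p.1 j * v p.2
  let V : Matrix (Fin 2) (Fin 2 × Fin 2) ℂ := Matrix.of fun i p => if i = p.1 then w p.2 else 0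
  have hI := Complex.I_mul_I
  have h1 : A ⊗ₖ ((1 / 2 : ℂ) • (1 + e • σ2)) = U * V := by
    ext ⟨i, a⟩ ⟨j, b⟩
    fin_cases i <;> fin_cases a <;> fin_cases j <;> fin_cases b <;>
      simp [U, V, v, w, σ2, Matrix.mul_apply, Fin.sum_univ_two] <;> grind
  have h2 : V * U = A := by
    ext i j
    fin_cases i <;> fin_cases j <;>
      simp [U, V, v, w, Matrix.mul_apply, Fintype.sum_prod_type, Fin.sum_univ_two] <;> grind
  have h3 := Matrix.charpoly_mul_comm' U V
  rw [h2, ← h1] at h3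
  simp only [Fintype.card_prod, Fintype.card_fin] at h3
  have hX : (X : ℂ[X]) ^ 2 ≠ 0 := pow_ne_zero _ X_ne_zero
  apply mul_left_cancel₀ hX
  rw [h3]; ring

lemma aux_prob (r s c1 c2 c3 : ℝ) (e : ℂ) (he : e * e = 1) :
    prob ((1 / 2 : ℂ) • (1 + e • σ2)) (rho r s c1 c2 c3) = 1 / 2 := by
  rw [prob, aux_meas _ _ _ _ _ e he, Matrix.trace_kronecker]
  simp [Matrix.trace, Fin.sum_univ_two, σ2, σ3]
  norm_num
  ring

lemma aux_log (x : ℝ) : x / 2 * Real.logb 2 (x / 2) = x / 2 * Real.logb 2 x - x / 2 := by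
  rcases eq_or_ne x 0 with rfl | hx
  · simp
  · rw [Real.logb_div hx (by norm_num), Real.logb_self_eq_one (by norm_num)]; ring

lemma aux_ent (r s c1 c2 c3 : ℝ) (e : ℂ) (he : e * e = 1) :
    entropy (((1 / 2 : ℝ) : ℂ)⁻¹ • measOp ((1 / 2 : ℂ) • (1 + e • σ2)) (rho r s c1 c2 c3)) =
      1 + f (Real.sqrt (r ^ 2 + c2 ^ 2)) := by
  set t := Real.sqrt (r ^ 2 + c2 ^ 2) with ht
  have htt : t * t = r ^ 2 + c2 ^ 2 := Real.mul_self_sqrt (by positivity)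
  have htc : (t : ℂ) * t = (r : ℂ) ^ 2 + (c2 : ℂ) ^ 2 := by exact_mod_cast htt
  have hI := Complex.I_mul_I
  rw [aux_meas _ _ _ _ _ e he, ← Matrix.smul_kronecker, entropy, aux_charpoly _ e he,
    Matrix.charpoly_fin_two]
  have key : ∀ A : M2, A = (((1 / 2 : ℝ) : ℂ)⁻¹ • (1 / 4 : ℂ) • (1 + (r : ℂ) • σ3 + (e * c2) • σ2)) →
      X ^ 2 - C A.trace * X + C A.det =
        (X - C (((1 + t) / 2 : ℝ) : ℂ)) * (X - C (((1 - t) / 2 : ℝ) : ℂ)) := by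
    intro A hA
    have h1 : A.trace = (((1 + t) / 2 : ℝ) : ℂ) + (((1 - t) / 2 : ℝ) : ℂ) := by
      subst hA
      simp [Matrix.trace, Fin.sum_univ_two, σ2, σ3]
      ring
    have h2 : A.det = (((1 + t) / 2 : ℝ) : ℂ) * (((1 - t) / 2 : ℝ) : ℂ) := by
      subst hA
      simp [Matrix.det_fin_two, σ2, σ3]
      grind
    rw [h1, h2, C_add, C_mul]; ring
  rw [key _ rfl, Polynomial.roots_mul, Polynomial.roots_mul, Polynomial.roots_X_pow,
    Polynomial.roots_X_sub_C, Polynomial.roots_X_sub_C]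
  · simp only [Multiset.map_add, Multiset.sum_add, Multiset.map_nsmul, Multiset.map_singleton,
      Multiset.sum_nsmul, Multiset.sum_singleton, Complex.ofReal_re, Complex.zero_re, aux_log, f]
    simp
    ring
  · exact mul_ne_zero (X_sub_C_ne_zero _) (X_sub_C_ne_zero _)
  · exact mul_ne_zero (pow_ne_zero _ X_ne_zero) (mul_ne_zero (X_sub_C_ne_zero _) (X_sub_C_ne_zero _))

/-- for the σ₂-eigenbasis measurement B₀ = (1/2)(I+σ₂), B₁ = (1/2)(I−σ₂)
on the second qubit, p₀ = p₁ = 1/2 and the conditional entropy is S₃ = 1 + f(√(r²+c₂²)). -/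
theorem stmt3 (r s c1 c2 c3 : ℝ) (hρ : (rho r s c1 c2 c3).PosSemidef) :
    prob ((1 / 2 : ℂ) • (1 + σ2)) (rho r s c1 c2 c3) = 1 / 2 ∧
    prob (1 - (1 / 2 : ℂ) • (1 + σ2)) (rho r s c1 c2 c3) = 1 / 2 ∧
    condEnt (rho r s c1 c2 c3) ((1 / 2 : ℂ) • (1 + σ2)) =
      1 + f (Real.sqrt (r ^ 2 + c2 ^ 2)) := by
  have hp : (1 / 2 : ℂ) • (1 + σ2) = (1 / 2 : ℂ) • (1 + (1 : ℂ) • σ2) := by rw [one_smul]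
  have hm : (1 - (1 / 2 : ℂ) • (1 + σ2) : M2) = (1 / 2 : ℂ) • (1 + (-1 : ℂ) • σ2) := by module
  have p0 := aux_prob r s c1 c2 c3 1 (by norm_num)
  have p1 := aux_prob r s c1 c2 c3 (-1) (by norm_num)
  have e0 := aux_ent r s c1 c2 c3 1 (by norm_num)
  have e1 := aux_ent r s c1 c2 c3 (-1) (by norm_num)
  rw [← hp] at p0 e0
  rw [← hm] at p1 e1
  refine ⟨p0, p1, ?_⟩
  rw [condEnt, p0, p1, e0, e1]
  ring
end
end

section
/- Let r, c₁, c₃ be real numbers with |r| < 1, |c₃| < 1, r² + c₁² < 1, let 0 ≤ p ≤ 1, and let ε_p(ρ) be as in the context with s = c₃·r and c₂ = −c₃·c₁. Then the quantum mutual information I(ε_p(ρ)) := S(A) + S(B) − S(ε_p(ρ)), where A and B are the partial traces of ε_p(ρ) over the second and first qubit respectively, equals f(r) + f(c₃r) − f(c₃) − f(√(r² + (1−p)⁴c₁²)). -/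
open Matrix Polynomial
open scoped Kronecker ComplexOrder

noncomputable section

/-- The entropy is read off from a factorization of the characteristic polynomial. -/
lemma entropy_of_charpoly {n : Type} [Fintype n] [DecidableEq n] (X : Matrix n n ℂ)
    (m : Multiset ℝ) (h : X.charpoly = ((m.map (fun x : ℝ => (x : ℂ))).map (fun a => (Polynomial.X : ℂ[X]) - C a)).prod) :
    entropy X = -((m.map (fun x => x * Real.logb 2 x)).sum) := by
  unfold entropy
  rw [h, Polynomial.roots_multiset_prod_X_sub_C, Multiset.map_map]
  simp

lemma entropy_diag (a b : ℝ) (X : M2) (h : X = !![(a : ℂ), 0; 0, (b : ℂ)]) :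
    entropy X = -(a * Real.logb 2 a + b * Real.logb 2 b) := by
  rw [entropy_of_charpoly X {a, b}]
  · simp
  · subst h
    simp [Matrix.charpoly, Matrix.det_fin_two, Matrix.charmatrix_apply]

lemma half_log (x : ℝ) (hx : 0 < x) :
    Real.logb 2 (x / 2) = Real.logb 2 x - 1 := by
  rw [Real.logb_div hx.ne' (by norm_num), Real.logb_self_eq_one (by norm_num)]

lemma entropy_qubit (t : ℝ) (ht : |t| < 1) (X : M2)
    (h : X = !![(((1 + t) / 2 : ℝ) : ℂ), 0; 0, (((1 - t) / 2 : ℝ) : ℂ)]) :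
    entropy X = 1 + f t := by
  obtain ⟨h1, h2⟩ := abs_lt.mp ht
  rw [entropy_diag _ _ X h, half_log _ (by linarith), half_log _ (by linarith)]
  unfold f
  ring

lemma quarter_log (x y : ℝ) (hx : 0 < x) (hy : 0 < y) :
    Real.logb 2 (x * y / 4) = Real.logb 2 x + Real.logb 2 y - 2 := by
  have : x * y / 4 = (x / 2) * (y / 2) := by ring
  rw [this, Real.logb_mul (by positivity) (by positivity), half_log x hx, half_log y hy]
  ring

/-- The matrix of the state in the ordered basis `00, 01, 10, 11`. -/
lemma reindex_rho (r s a b c : ℝ) :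
    Matrix.reindex finProdFinEquiv finProdFinEquiv (rho r s a b c) =
      (!![((1 + r + s + c) / 4 : ℂ), 0, 0, (a - b) / 4;
         0, (1 + r - s - c) / 4, (a + b) / 4, 0;
         0, (a + b) / 4, (1 - r + s - c) / 4, 0;
         (a - b) / 4, 0, 0, (1 - r - s + c) / 4] : Matrix (Fin (2 * 2)) (Fin (2 * 2)) ℂ) := by
  have e0 : (finProdFinEquiv (m := 2) (n := 2)).symm 0 = (0, 0) := by decide
  have e1 : (finProdFinEquiv (m := 2) (n := 2)).symm 1 = (0, 1) := by decide
  have e2 : (finProdFinEquiv (m := 2) (n := 2)).symm 2 = (1, 0) := by decide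
  have e3 : (finProdFinEquiv (m := 2) (n := 2)).symm 3 = (1, 1) := by decide
  ext i j
  rw [Matrix.reindex_apply, Matrix.submatrix_apply]
  change Fin 4 at i j
  fin_cases i <;> fin_cases j <;>
    simp only [Fin.zero_eta, Fin.mk_one, Fin.reduceFinMk] <;>
    simp [e0, e1, e2, e3, rho, σ1, σ2, σ3, Matrix.kroneckerMap_apply] <;> ring_nf <;> simp

lemma charpoly_rho (r a c R : ℝ) (hR : R ^ 2 = r ^ 2 + a ^ 2) :
    (rho r (c * r) a (-(c * a)) c).charpoly =
      ((Polynomial.X : ℂ[X]) - C (((1 + c) * (1 + R) / 4 : ℝ) : ℂ)) * ((Polynomial.X : ℂ[X]) - C (((1 + c) * (1 - R) / 4 : ℝ) : ℂ)) *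
      (((Polynomial.X : ℂ[X]) - C (((1 - c) * (1 + R) / 4 : ℝ) : ℂ)) * ((Polynomial.X : ℂ[X]) - C (((1 - c) * (1 - R) / 4 : ℝ) : ℂ))) := by
  rw [← Matrix.charpoly_reindex finProdFinEquiv, reindex_rho]
  have hR2 : (R : ℂ) ^ 2 = r ^ 2 + a ^ 2 := by exact_mod_cast hR
  apply Polynomial.funext
  intro z
  rw [Matrix.eval_charpoly]
  simp only [eval_mul, eval_sub, eval_X, eval_C]
  have : (scalar (Fin (2 * 2)) z - (!![((1 + r + (c * r : ℝ) + c) / 4 : ℂ), 0, 0, (a - (-(c * a) : ℝ)) / 4;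
         0, (1 + r - (c * r : ℝ) - c) / 4, (a + (-(c * a) : ℝ)) / 4, 0;
         0, (a + (-(c * a) : ℝ)) / 4, (1 - r + (c * r : ℝ) - c) / 4, 0;
         (a - (-(c * a) : ℝ)) / 4, 0, 0, (1 - r - (c * r : ℝ) + c) / 4] : Matrix (Fin (2 * 2)) (Fin (2 * 2)) ℂ)).det =
      ((z - (1 + c) * (1 + r) / 4) * (z - (1 + c) * (1 - r) / 4) - ((1 + c) * a / 4) ^ 2) *
      ((z - (1 - c) * (1 + r) / 4) * (z - (1 - c) * (1 - r) / 4) - ((1 - c) * a / 4) ^ 2) := by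
    change Matrix.det (n := Fin 4) _ = _
    simp [Matrix.det_succ_row_zero, Fin.sum_univ_succ, Fin.succAbove, Matrix.diagonal_apply]
    ring
  rw [this]
  push_cast
  congr 1
  · linear_combination ((1 + c) ^ 2 / 16 : ℂ) * hR2
  · linear_combination ((1 - c) ^ 2 / 16 : ℂ) * hR2

lemma entropy_rho (r a c R : ℝ) (hR : R ^ 2 = r ^ 2 + a ^ 2) (hR1 : |R| < 1) (hc : |c| < 1) :
    entropy (rho r (c * r) a (-(c * a)) c) = 2 + f c + f R := by
  obtain ⟨h1, h2⟩ := abs_lt.mp hR1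
  obtain ⟨h3, h4⟩ := abs_lt.mp hc
  rw [entropy_of_charpoly _ {(1 + c) * (1 + R) / 4, (1 + c) * (1 - R) / 4,
    (1 - c) * (1 + R) / 4, (1 - c) * (1 - R) / 4}]
  · simp only [Multiset.insert_eq_cons, Multiset.map_cons, Multiset.map_singleton,
      Multiset.sum_cons, Multiset.sum_singleton]
    rw [quarter_log _ _ (by linarith) (by linarith), quarter_log _ _ (by linarith) (by linarith),
      quarter_log _ _ (by linarith) (by linarith), quarter_log _ _ (by linarith) (by linarith)]
    unfold f
    ring
  · rw [charpoly_rho r a c R hR]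
    simp only [Multiset.insert_eq_cons, Multiset.map_cons, Multiset.map_singleton,
      Multiset.prod_cons, Multiset.prod_singleton]
    ring

lemma ptraceB_rho (r s a b c : ℝ) :
    ptraceB (rho r s a b c) = !![(((1 + r) / 2 : ℝ) : ℂ), 0; 0, (((1 - r) / 2 : ℝ) : ℂ)] := by
  ext i j
  fin_cases i <;> fin_cases j <;>
    simp [ptraceB, rho, σ1, σ2, σ3, Matrix.kroneckerMap_apply] <;> ring

lemma ptraceA_rho (r s a b c : ℝ) :
    ptraceA (rho r s a b c) = !![(((1 + s) / 2 : ℝ) : ℂ), 0; 0, (((1 - s) / 2 : ℝ) : ℂ)] := by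
  ext i j
  fin_cases i <;> fin_cases j <;>
    simp [ptraceA, rho, σ1, σ2, σ3, Matrix.kroneckerMap_apply] <;> ring

/-- with s = c₃r, c₂ = −c₃c₁, the quantum mutual information of ε_p(ρ)
is f(r) + f(c₃r) − f(c₃) − f(√(r² + (1−p)⁴c₁²)). -/
theorem stmt11 (r c1 c3 p : ℝ) (hr : |r| < 1) (hc3 : |c3| < 1)
    (hrc : r ^ 2 + c1 ^ 2 < 1) (hp0 : 0 ≤ p) (hp1 : p ≤ 1) :
    entropy (ptraceB (epsRho p r (c3 * r) c1 (-(c3 * c1)) c3)) +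
      entropy (ptraceA (epsRho p r (c3 * r) c1 (-(c3 * c1)) c3)) -
      entropy (epsRho p r (c3 * r) c1 (-(c3 * c1)) c3) =
    f r + f (c3 * r) - f c3 - f (Real.sqrt (r ^ 2 + (1 - p) ^ 4 * c1 ^ 2)) := by
  have hq : (1 - p) ^ 4 ≤ 1 := pow_le_one₀ (by linarith) (by linarith)
  have hlt : r ^ 2 + (1 - p) ^ 4 * c1 ^ 2 < 1 := by
    nlinarith [sq_nonneg c1]
  have hnn : 0 ≤ r ^ 2 + (1 - p) ^ 4 * c1 ^ 2 := by positivity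
  have hR1 : |Real.sqrt (r ^ 2 + (1 - p) ^ 4 * c1 ^ 2)| < 1 := by
    rw [abs_of_nonneg (Real.sqrt_nonneg _), Real.sqrt_lt' one_pos]
    simpa using hlt
  have hs : |c3 * r| < 1 := by
    rw [abs_mul]
    nlinarith [abs_nonneg c3, abs_nonneg r]
  unfold epsRho
  rw [entropy_qubit r hr _ (ptraceB_rho _ _ _ _ _), entropy_qubit (c3 * r) hs _ (ptraceA_rho _ _ _ _ _)]
  have e : (1 - p) ^ 2 * -(c3 * c1) = -(c3 * ((1 - p) ^ 2 * c1)) := by ring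
  rw [e, entropy_rho r ((1 - p) ^ 2 * c1) c3 _ (by rw [Real.sq_sqrt hnn]; ring) hR1 hc3]
  ring
end
end

section
/- Let r, c₁, c₃ be real numbers with |r| < 1, |c₃| ≤ 1 and r² + c₁² ≤ 1, and define S₁ = 1 + f(r) + f(c₃) − f(c₃r) and, for 0 ≤ p ≤ 1, S₂(p) = 1 + f(√(r² + (1−p)⁴c₁²)). If S₂(0) ≤ S₁, then there exists p₀ ∈ [0,1] such that S₂(p) ≤ S₁ for all p ∈ [0,p₀] and S₂(p) ≥ S₁ for all p ∈ [p₀,1]. -/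
open Matrix Polynomial
open scoped Kronecker ComplexOrder

noncomputable section

theorem f_eq_binEntropy (t : ℝ) :
    f t = Real.binEntropy ((1 + t) / 2) / Real.log 2 - 1 := by
  have hl : Real.log 2 ≠ 0 := (Real.log_pos (by norm_num)).ne'
  have key : ∀ x : ℝ, x / 2 * Real.log (x / 2) = x / 2 * Real.log x - x / 2 * Real.log 2 := by
    intro x
    by_cases hx : x = 0
    · simp [hx]
    · rw [Real.log_div hx (by norm_num)]; ring
  have k1 := key (1 + t)
  have k2 := key (1 - t)
  have e : 1 - (1 + t) / 2 = (1 - t) / 2 := by ring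
  unfold f
  rw [Real.binEntropy, e, Real.log_inv, Real.log_inv, mul_neg, mul_neg, k1, k2,
    Real.logb, Real.logb]
  field_simp
  ring

theorem f_continuous : Continuous f := by
  have : f = fun t => Real.binEntropy ((1 + t) / 2) / Real.log 2 - 1 :=
    funext f_eq_binEntropy
  rw [this]
  have h := Real.binEntropy_continuous.comp
    (show Continuous (fun t : ℝ => (1 + t) / 2) by fun_prop)
  exact (h.div_const _).sub continuous_const

theorem f_anti {x y : ℝ} (hx : 0 ≤ x) (hxy : x ≤ y) (hy : y ≤ 1) : f y ≤ f x := by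
  rw [f_eq_binEntropy, f_eq_binEntropy]
  have h : Real.binEntropy ((1 + y) / 2) ≤ Real.binEntropy ((1 + x) / 2) := by
    apply Real.binEntropy_strictAntiOn.antitoneOn
    · constructor <;> linarith
    · constructor <;> linarith
    · linarith
  have hl : 0 < Real.log 2 := Real.log_pos (by norm_num)
  have := div_le_div_of_nonneg_right h hl.le
  linarith

theorem f_abs (t : ℝ) : f |t| = f t := by
  rcases abs_choice t with h | h
  · rw [h]
  · rw [h]
    unfold f
    rw [sub_neg_eq_add, ← sub_eq_add_neg]
    ring

/-- if S₂(0) ≤ S₁ then there is a transition point p₀ ∈ [0,1] with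
S₂(p) ≤ S₁ before p₀ and S₂(p) ≥ S₁ after p₀. -/
theorem stmt16 (r c1 c3 : ℝ) (hr : |r| < 1) (hc3 : |c3| ≤ 1)
    (hrc : r ^ 2 + c1 ^ 2 ≤ 1)
    (h0 : 1 + f (Real.sqrt (r ^ 2 + (1 - (0 : ℝ)) ^ 4 * c1 ^ 2)) ≤
      1 + f r + f c3 - f (c3 * r)) :
    ∃ p0 : ℝ, 0 ≤ p0 ∧ p0 ≤ 1 ∧
      (∀ p : ℝ, 0 ≤ p → p ≤ p0 →
        1 + f (Real.sqrt (r ^ 2 + (1 - p) ^ 4 * c1 ^ 2)) ≤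
          1 + f r + f c3 - f (c3 * r)) ∧
      (∀ p : ℝ, p0 ≤ p → p ≤ 1 →
        1 + f r + f c3 - f (c3 * r) ≤
          1 + f (Real.sqrt (r ^ 2 + (1 - p) ^ 4 * c1 ^ 2))) := by
  set S1 := 1 + f r + f c3 - f (c3 * r) with hS1
  set g : ℝ → ℝ := fun p => 1 + f (Real.sqrt (r ^ 2 + (1 - p) ^ 4 * c1 ^ 2)) with hg
  have hcont : Continuous g := by
    have h := f_continuous.comp
      (show Continuous (fun p : ℝ => Real.sqrt (r ^ 2 + (1 - p) ^ 4 * c1 ^ 2)) by fun_prop)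
    exact continuous_const.add h
  have hmono : ∀ p q : ℝ, 0 ≤ p → p ≤ q → q ≤ 1 → g p ≤ g q := by
    intro p q hp hpq hq
    have h4 : (1 - q) ^ 4 ≤ (1 - p) ^ 4 :=
      pow_le_pow_left₀ (by linarith) (by linarith) 4
    have h41 : (1 - p) ^ 4 ≤ 1 := pow_le_one₀ (by linarith) (by linarith)
    have hc := sq_nonneg c1
    have : f (Real.sqrt (r ^ 2 + (1 - p) ^ 4 * c1 ^ 2)) ≤
        f (Real.sqrt (r ^ 2 + (1 - q) ^ 4 * c1 ^ 2)) := by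
      apply f_anti (Real.sqrt_nonneg _)
      · apply Real.sqrt_le_sqrt
        have := mul_le_mul_of_nonneg_right h4 hc
        linarith
      · apply Real.sqrt_le_one.mpr
        have := mul_le_mul_of_nonneg_right h41 hc
        linarith
    simp only [hg]
    linarith
  have h1 : S1 ≤ g 1 := by
    have e : g 1 = 1 + f r := by
      simp only [hg]
      rw [show r ^ 2 + (1 - (1 : ℝ)) ^ 4 * c1 ^ 2 = r ^ 2 by ring, Real.sqrt_sq_eq_abs, f_abs]
    have h : f |c3| ≤ f |c3 * r| := by
      apply f_anti (abs_nonneg _) _ hc3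
      rw [abs_mul]
      exact mul_le_of_le_one_right (abs_nonneg _) hr.le
    rw [f_abs, f_abs] at h
    rw [e, hS1]
    linarith
  obtain ⟨p0, ⟨hp0, hp1⟩, he⟩ :=
    intermediate_value_Icc (zero_le_one' ℝ) hcont.continuousOn ⟨h0, h1⟩
  refine ⟨p0, hp0, hp1, fun p hp hpp => ?_, fun p hpp hp => ?_⟩
  · rw [← he]; exact hmono p p0 hp hpp hp1
  · rw [← he]; exact hmono p0 p hp0 hpp hp
end
end

section
/- Let r, c₁, c₂ be real numbers with c₂² ≤ c₁² and r² + c₁² ≤ 1. Then for every m ∈ [0, 1/4], f(√(r² + c₁² − 4m(c₁² − c₂²))) ≥ min{ f(√(r² + c₁²)), f(√(r² + c₂²)) }; in other words, the minimum of m ↦ f(√(r² + c₁² − 4m(c₁² − c₂²))) over [0,1/4] is attained at an endpoint m = 0 or m = 1/4. -/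
open Matrix Polynomial
open scoped Kronecker ComplexOrder

noncomputable section

theorem f_eq_aux (t : ℝ) (h0 : 0 ≤ t) :
    f t = Real.binEntropy ((1 + t) / 2) / Real.log 2 - 1 := by
  have hl : Real.log 2 ≠ 0 := (Real.log_pos one_lt_two).ne'
  have e1 : 1 - (1 + t) / 2 = (1 - t) / 2 := by ring
  have h2 : Real.log ((1 + t) / 2) = Real.log (1 + t) - Real.log 2 :=
    Real.log_div (by linarith) two_ne_zero
  unfold f Real.binEntropy Real.logb
  rw [e1, Real.log_inv, Real.log_inv, h2]
  by_cases ht : 1 - t = 0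
  · have : t = 1 := by linarith
    subst this
    field_simp
    norm_num
  · rw [Real.log_div ht two_ne_zero]
    field_simp
    ring

theorem f_anti_aux (s t : ℝ) (h0 : 0 ≤ s) (hst : s ≤ t) (h1 : t ≤ 1) : f t ≤ f s := by
  rw [f_eq_aux t (h0.trans hst), f_eq_aux s h0]
  have hl : 0 < Real.log 2 := Real.log_pos one_lt_two
  have := Real.binEntropy_strictAntiOn.antitoneOn
    (a := (1 + s) / 2) (b := (1 + t) / 2)
    ⟨by norm_num; linarith, by linarith⟩ ⟨by norm_num; linarith, by linarith⟩ (by linarith)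
  gcongr

/-- the minimum of m ↦ f(√(r² + c₁² − 4m(c₁² − c₂²))) over [0, 1/4]
is attained at an endpoint. -/
theorem stmt17 (r c1 c2 : ℝ) (hc : c2 ^ 2 ≤ c1 ^ 2) (hrc : r ^ 2 + c1 ^ 2 ≤ 1)
    (m : ℝ) (hm0 : 0 ≤ m) (hm1 : m ≤ 1 / 4) :
    min (f (Real.sqrt (r ^ 2 + c1 ^ 2))) (f (Real.sqrt (r ^ 2 + c2 ^ 2))) ≤
      f (Real.sqrt (r ^ 2 + c1 ^ 2 - 4 * m * (c1 ^ 2 - c2 ^ 2))) := by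
  apply (min_le_left _ _).trans
  apply f_anti_aux _ _ (Real.sqrt_nonneg _)
  · apply Real.sqrt_le_sqrt
    have := mul_nonneg hm0 (sub_nonneg.2 hc)
    linarith
  · exact Real.sqrt_le_one.mpr hrc
end
end
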